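/- Let α > -1 and 0 < p < α + 2. For z ∈ 𝔻 define F_z(ω) = (1-|z|²)^{(α+2)/p} / (1-z̄ω)^{2(α+2)/p-1} - (1-|z|²)^{(α+2)/p+1} / (1-z̄ω)^{2(α+2)/p} for ω ∈ 𝔻. Then there is a constant C > 0 independent of z such that ‖F_z‖_{D^p_α} ≤ C for all z ∈ 𝔻, and moreover F_z(z) = 0 and F'_z(z) = -z̄ / (1-|z|²)^{(α+2)/p}. -/

import Mathlib

open MeasureTheory Metric Set Filter Topology ENNReal

noncomputable section

/-- The open unit disk in ℂ. -/
def unitDisk : Set ℂ := Metric.ball (0 : ℂ) 1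

/-- The normalized Lebesgue area measure `dA = (1/π) dx dy` on ℂ. -/
def areaMeasure : Measure ℂ := (ENNReal.ofReal (Real.pi)⁻¹) • (volume : Measure ℂ)

/-- `∫_𝔻 |f'(z)|^p (1-|z|²)^α dA(z)`, as an extended nonnegative real. -/
def dirichletLintegral (p α : ℝ) (f : ℂ → ℂ) : ℝ≥0∞ :=
  ∫⁻ z in unitDisk, ENNReal.ofReal (‖deriv f z‖ ^ p * (1 - ‖z‖ ^ 2) ^ α) ∂areaMeasure

/-- Membership in the weighted Dirichlet space `D^p_α`: analytic on 𝔻 with finite norm. -/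
def MemDirichlet (p α : ℝ) (f : ℂ → ℂ) : Prop :=
  DifferentiableOn ℂ f unitDisk ∧ dirichletLintegral p α f < ⊤

/-- The norm of the weighted Dirichlet space `D^p_α`:
`(|f(0)|^p + ∫_𝔻 |f'(z)|^p (1-|z|²)^α dA(z))^{1/p}`. -/
def dirichletNorm (p α : ℝ) (f : ℂ → ℂ) : ℝ :=
  (‖f 0‖ ^ p + (dirichletLintegral p α f).toReal) ^ (1 / p)

/-- The test function
`F_z(ω) = (1-|z|²)^{(α+2)/p}/(1-z̄ω)^{2(α+2)/p-1} - (1-|z|²)^{(α+2)/p+1}/(1-z̄ω)^{2(α+2)/p}`. -/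
def testFnF (p α : ℝ) (z : ℂ) : ℂ → ℂ := fun ω =>
  (((1 - ‖z‖ ^ 2) ^ ((α + 2) / p) : ℝ) : ℂ) /
      (1 - (starRingEnd ℂ) z * ω) ^ ((2 * (α + 2) / p - 1 : ℝ) : ℂ) -
    (((1 - ‖z‖ ^ 2) ^ ((α + 2) / p + 1) : ℝ) : ℂ) /
      (1 - (starRingEnd ℂ) z * ω) ^ ((2 * (α + 2) / p : ℝ) : ℂ)

/-!
Differentiating `F_z` gives two terms, and `1-|z|² ≤ 2|1-z̄w|` absorbs the second into the first, so
that `|F_z'(w)|^p` is at most a constant times `((1-|z|²)/|1-z̄w|²)^(α+2)`. Let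
`φ_z(w) = (z-w)/(1-z̄w)`. Since `|φ_z'(w)| = (1-|z|²)/|1-z̄w|²` and
`1-|φ_z(w)|² = |φ_z'(w)| (1-|w|²)`, this majorant times the weight `(1-|w|²)^α` equals
`|φ_z'(w)|² (1-|φ_z(w)|²)^α`, whose integral does not depend on `z` because `φ_z` maps the disk
bijectively onto itself.
-/

section DiskKernel

open ComplexConjugate

variable {z w : ℂ}

lemma mem_unitDisk : z ∈ unitDisk ↔ ‖z‖ < 1 := mem_ball_zero_iff

lemma measurableSet_unitDisk : MeasurableSet unitDisk := measurableSet_ball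

lemma mem_unitDisk_iff_one_sub_norm_sq_pos : z ∈ unitDisk ↔ 0 < 1 - ‖z‖ ^ 2 := by
  rw [mem_unitDisk, sub_pos, sq_lt_one_iff₀ (norm_nonneg z)]

lemma one_sub_norm_sq_pos (hz : z ∈ unitDisk) : 0 < 1 - ‖z‖ ^ 2 :=
  mem_unitDisk_iff_one_sub_norm_sq_pos.1 hz

lemma one_sub_conj_mul_mem_slitPlane (hz : z ∈ unitDisk) (hw : w ∈ unitDisk) :
    1 - conj z * w ∈ Complex.slitPlane := by
  rw [sub_eq_add_neg]
  apply Complex.mem_slitPlane_of_norm_lt_one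
  rw [norm_neg, norm_mul, RCLike.norm_conj]
  exact mul_lt_one_of_nonneg_of_lt_one_left (norm_nonneg z) (mem_unitDisk.1 hz)
    (mem_unitDisk.1 hw).le

lemma one_sub_conj_mul_ne_zero (hz : z ∈ unitDisk) (hw : w ∈ unitDisk) : 1 - conj z * w ≠ 0 :=
  Complex.slitPlane_ne_zero (one_sub_conj_mul_mem_slitPlane hz hw)

lemma one_sub_norm_sq_le_two_mul_norm_one_sub_conj_mul (z : ℂ) (hw : ‖w‖ ≤ 1) :
    1 - ‖z‖ ^ 2 ≤ 2 * ‖1 - conj z * w‖ := by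
  have hreverse : 1 - ‖z‖ * ‖w‖ ≤ ‖1 - conj z * w‖ := by
    simpa only [norm_one, norm_mul, RCLike.norm_conj] using norm_sub_norm_le 1 (conj z * w)
  have hzw : ‖z‖ * ‖w‖ ≤ ‖z‖ := mul_le_of_le_one_right (norm_nonneg z) hw
  nlinarith [sq_nonneg (1 - ‖z‖)]

lemma one_sub_conj_mul_self (z : ℂ) : 1 - conj z * z = ((1 - ‖z‖ ^ 2 : ℝ) : ℂ) := by
  rw [Complex.conj_mul']
  push_cast
  rfl

lemma norm_one_sub_conj_mul_sq_sub_norm_sub_sq (z w : ℂ) :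
    ‖1 - conj z * w‖ ^ 2 - ‖z - w‖ ^ 2 = (1 - ‖z‖ ^ 2) * (1 - ‖w‖ ^ 2) := by
  simp only [← Complex.normSq_eq_norm_sq, Complex.normSq_apply, Complex.sub_re, Complex.sub_im,
    Complex.mul_re, Complex.mul_im, Complex.conj_re, Complex.conj_im, Complex.one_re,
    Complex.one_im]
  ring

lemma hasDerivAt_one_sub_conj_mul (z w : ℂ) :
    HasDerivAt (fun ω : ℂ => 1 - conj z * ω) (-conj z) w := by
  simpa using ((hasDerivAt_id w).const_mul (conj z)).const_sub 1

end DiskKernel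

section DiskInvolution

open ComplexConjugate

variable {z w : ℂ}

/-- For `z` in the unit disk, the involutive automorphism of the disk that exchanges `0` and `z`.
It is the change of variables that makes the integral bound uniform in `z`. -/
def diskInvolution (z w : ℂ) : ℂ := (z - w) / (1 - conj z * w)

lemma one_sub_norm_diskInvolution_sq (h : 1 - conj z * w ≠ 0) :
    1 - ‖diskInvolution z w‖ ^ 2 =
      (1 - ‖z‖ ^ 2) * (1 - ‖w‖ ^ 2) / ‖1 - conj z * w‖ ^ 2 := by
  rw [diskInvolution, norm_div, div_pow, ← norm_one_sub_conj_mul_sq_sub_norm_sub_sq, sub_div,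
    div_self (pow_ne_zero 2 (norm_ne_zero_iff.2 h))]

lemma mapsTo_diskInvolution (hz : z ∈ unitDisk) :
    MapsTo (diskInvolution z) unitDisk unitDisk := by
  intro w hw
  have hker := one_sub_conj_mul_ne_zero hz hw
  rw [mem_unitDisk_iff_one_sub_norm_sq_pos, one_sub_norm_diskInvolution_sq hker]
  have := one_sub_norm_sq_pos hz
  have := one_sub_norm_sq_pos hw
  positivity

lemma diskInvolution_diskInvolution (hz : z ∈ unitDisk) (hw : w ∈ unitDisk) :
    diskInvolution z (diskInvolution z w) = w := by
  have hzz := one_sub_conj_mul_ne_zero hz hz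
  have hzw := one_sub_conj_mul_ne_zero hz hw
  have hnum : z - diskInvolution z w = w * (1 - conj z * z) / (1 - conj z * w) := by
    rw [diskInvolution, eq_div_iff hzw, sub_mul, div_mul_cancel₀ _ hzw]
    ring
  have hden : 1 - conj z * diskInvolution z w = (1 - conj z * z) / (1 - conj z * w) := by
    rw [diskInvolution, eq_div_iff hzw, sub_mul, mul_assoc, div_mul_cancel₀ _ hzw]
    ring
  rw [diskInvolution, hnum, hden, div_div_div_cancel_right₀ hzw, mul_div_cancel_right₀ w hzz]

lemma bijOn_diskInvolution (hz : z ∈ unitDisk) : BijOn (diskInvolution z) unitDisk unitDisk :=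
  InvOn.bijOn
    ⟨fun _ => diskInvolution_diskInvolution hz, fun _ => diskInvolution_diskInvolution hz⟩
    (mapsTo_diskInvolution hz) (mapsTo_diskInvolution hz)

lemma hasDerivAt_diskInvolution (h : 1 - conj z * w ≠ 0) :
    HasDerivAt (diskInvolution z)
      (-((1 - ‖z‖ ^ 2 : ℝ) : ℂ) / (1 - conj z * w) ^ 2) w := by
  have hsub : HasDerivAt (fun ω : ℂ => z - ω) (-1) w := (hasDerivAt_id w).const_sub z
  convert! hsub.div (hasDerivAt_one_sub_conj_mul z w) h using 1
  rw [← one_sub_conj_mul_self]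
  ring

end DiskInvolution

section WeightedArea

open ComplexConjugate

instance : areaMeasure.IsAddHaarMeasure :=
  .smul volume (ENNReal.ofReal_pos.2 (inv_pos.2 Real.pi_pos)).ne' ENNReal.ofReal_ne_top

lemma abs_det_restrictScalars_toSpanSingleton (c : ℂ) :
    |((ContinuousLinearMap.toSpanSingleton ℂ c).restrictScalars ℝ).det| = ‖c‖ ^ 2 := by
  simp [ContinuousLinearMap.det, LinearMap.det_restrictScalars, Algebra.norm_complex_eq,
    Complex.normSq_eq_norm_sq]

lemma lintegral_image_eq_lintegral_norm_deriv_sq_mul (μ : Measure ℂ) [μ.IsAddHaarMeasure]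
    {s : Set ℂ} {φ φ' : ℂ → ℂ} (hs : MeasurableSet s)
    (hφ : ∀ w ∈ s, HasDerivWithinAt φ (φ' w) s w) (hinj : InjOn φ s) (g : ℂ → ℝ≥0∞) :
    ∫⁻ w in φ '' s, g w ∂μ = ∫⁻ w in s, ENNReal.ofReal (‖φ' w‖ ^ 2) * g (φ w) ∂μ := by
  simpa only [abs_det_restrictScalars_toSpanSingleton] using
    lintegral_image_eq_lintegral_abs_det_fderiv_mul μ hs
      (fun w hw => (hφ w hw).hasFDerivWithinAt.restrictScalars ℝ) hinj g

lemma integrableOn_ball_one_sub_norm_sq_rpow {E : Type*} [NormedAddCommGroup E]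
    [NormedSpace ℝ E] [FiniteDimensional ℝ E] [Nontrivial E] [MeasurableSpace E] [BorelSpace E]
    (μ : Measure E) [μ.IsAddHaarMeasure] {α : ℝ} (hα : -1 < α) :
    IntegrableOn (fun w : E => (1 - ‖w‖ ^ 2) ^ α) (ball 0 1) μ := by
  rw [integrableOn_fun_norm_addHaar μ (f := fun r : ℝ => (1 - r ^ 2) ^ α)]
  have hsing : IntervalIntegrable (fun r : ℝ => (1 - r) ^ α) volume 0 1 := by
    simpa using ((intervalIntegral.intervalIntegrable_rpow' hα (a := 0) (b := 1)).comp_sub_left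
      1).symm
  have hreg : ContinuousOn (fun r : ℝ => r ^ (Module.finrank ℝ E - 1) * (1 + r) ^ α)
      (uIcc 0 1) := by
    rw [uIcc_of_le zero_le_one]
    exact (continuousOn_pow _).mul
      (ContinuousOn.rpow_const (by fun_prop) fun r hr => Or.inl (by linarith [hr.1]))
  refine (((intervalIntegrable_iff_integrableOn_Ioo_of_le zero_le_one).1
    (hsing.continuousOn_mul hreg)).congr_fun ?_ measurableSet_Ioo)
  intro r hr
  have hfactor : 1 - r ^ 2 = (1 + r) * (1 - r) := by ring
  simp only [smul_eq_mul]
  rw [hfactor, Real.mul_rpow (by linarith [hr.1]) (by linarith [hr.2]), mul_assoc]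

/-- The total mass of the weighted area measure `(1-|w|²)^α dA(w)` on the unit disk. The
integrals of `|F_z'|^p` against that measure are at most a constant multiple of it. -/
def diskWeightMass (α : ℝ) : ℝ≥0∞ :=
  ∫⁻ w in unitDisk, ENNReal.ofReal ((1 - ‖w‖ ^ 2) ^ α) ∂areaMeasure

lemma diskWeightMass_lt_top {α : ℝ} (hα : -1 < α) : diskWeightMass α < ⊤ :=
  (lintegral_mono fun _ => Real.ofReal_le_enorm _).trans_lt
    (integrableOn_ball_one_sub_norm_sq_rpow areaMeasure hα).2

lemma lintegral_kernel_rpow_mul_weight (α : ℝ) {z : ℂ} (hz : z ∈ unitDisk) :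
    ∫⁻ w in unitDisk, ENNReal.ofReal
        (((1 - ‖z‖ ^ 2) / ‖1 - conj z * w‖ ^ 2) ^ (α + 2) * (1 - ‖w‖ ^ 2) ^ α) ∂areaMeasure =
      diskWeightMass α := by
  have hbij := bijOn_diskInvolution hz
  conv_rhs => rw [diskWeightMass, ← hbij.image_eq]
  rw [lintegral_image_eq_lintegral_norm_deriv_sq_mul areaMeasure measurableSet_unitDisk
    (fun w hw => (hasDerivAt_diskInvolution
      (one_sub_conj_mul_ne_zero hz hw)).hasDerivWithinAt) hbij.injOn]
  refine setLIntegral_congr_fun measurableSet_unitDisk fun w hw => ?_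
  have hker := one_sub_conj_mul_ne_zero hz hw
  have hz' := one_sub_norm_sq_pos hz
  have hw' := one_sub_norm_sq_pos hw
  have hratio : 0 < (1 - ‖z‖ ^ 2) / ‖1 - conj z * w‖ ^ 2 := by positivity
  have hderiv : ‖-((1 - ‖z‖ ^ 2 : ℝ) : ℂ) / (1 - conj z * w) ^ 2‖ =
      (1 - ‖z‖ ^ 2) / ‖1 - conj z * w‖ ^ 2 := by
    rw [norm_div, norm_neg, Complex.norm_of_nonneg hz'.le, norm_pow]
  have hweight : 1 - ‖diskInvolution z w‖ ^ 2 =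
      (1 - ‖z‖ ^ 2) / ‖1 - conj z * w‖ ^ 2 * (1 - ‖w‖ ^ 2) := by
    rw [one_sub_norm_diskInvolution_sq hker, mul_div_right_comm]
  rw [hderiv, hweight, ← ENNReal.ofReal_mul (by positivity), Real.mul_rpow hratio.le hw'.le,
    add_comm α 2, Real.rpow_add hratio, Real.rpow_two, mul_assoc]

end WeightedArea

section TestFunction

open ComplexConjugate

variable {s : ℝ} {z w : ℂ}

/-- The functions `F_z` indexed by the single exponent `s = (α+2)/p` through which they depend on
`p` and `α`, with the kernels written as negative powers. -/
def testFnOfExponent (s : ℝ) (z w : ℂ) : ℂ :=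
  (((1 - ‖z‖ ^ 2) ^ s : ℝ) : ℂ) * (1 - conj z * w) ^ ((-(2 * s - 1) : ℝ) : ℂ) -
    (((1 - ‖z‖ ^ 2) ^ (s + 1) : ℝ) : ℂ) * (1 - conj z * w) ^ ((-(2 * s) : ℝ) : ℂ)

lemma testFnF_eq_testFnOfExponent (p α : ℝ) (z : ℂ) :
    testFnF p α z = testFnOfExponent ((α + 2) / p) z := by
  funext w
  have hexponent : 2 * (α + 2) / p = 2 * ((α + 2) / p) := mul_div_assoc 2 (α + 2) p
  simp only [testFnF, testFnOfExponent, hexponent, Complex.ofReal_neg, Complex.cpow_neg]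
  simp only [div_eq_mul_inv]

lemma testFnOfExponent_self (s : ℝ) (hz : z ∈ unitDisk) : testFnOfExponent s z z = 0 := by
  have hpos := one_sub_norm_sq_pos hz
  rw [testFnOfExponent, one_sub_conj_mul_self, ← Complex.ofReal_cpow hpos.le,
    ← Complex.ofReal_cpow hpos.le, ← Complex.ofReal_mul, ← Complex.ofReal_mul,
    ← Real.rpow_add hpos, ← Real.rpow_add hpos]
  ring_nf

lemma norm_testFnOfExponent_zero_le_one (hs : 0 ≤ s) (hz : z ∈ unitDisk) :
    ‖testFnOfExponent s z 0‖ ≤ 1 := by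
  have hpos := one_sub_norm_sq_pos hz
  have hle : 1 - ‖z‖ ^ 2 ≤ 1 := sub_le_self 1 (sq_nonneg ‖z‖)
  have hvalue : testFnOfExponent s z 0 =
      (((1 - ‖z‖ ^ 2) ^ s - (1 - ‖z‖ ^ 2) ^ (s + 1) : ℝ) : ℂ) := by
    simp only [testFnOfExponent, mul_zero, sub_zero, Complex.one_cpow, mul_one,
      Complex.ofReal_sub]
  rw [hvalue, Complex.norm_real]
  exact abs_sub_le_of_nonneg_of_le (by positivity) (Real.rpow_le_one hpos.le hle hs)
    (by positivity) (Real.rpow_le_one hpos.le hle (by linarith))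

lemma hasDerivAt_testFnOfExponent (s : ℝ) (h : 1 - conj z * w ∈ Complex.slitPlane) :
    HasDerivAt (testFnOfExponent s z)
      (conj z * (((2 * s - 1) * (1 - ‖z‖ ^ 2) ^ s : ℝ) *
          (1 - conj z * w) ^ ((-(2 * s) : ℝ) : ℂ) -
        (2 * s * (1 - ‖z‖ ^ 2) ^ (s + 1) : ℝ) *
          (1 - conj z * w) ^ ((-(2 * s) - 1 : ℝ) : ℂ))) w := by
  have hcpow (c : ℝ) := (hasDerivAt_one_sub_conj_mul z w).cpow_const (c := (c : ℂ)) h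
  convert! ((hcpow (-(2 * s - 1))).const_mul (((1 - ‖z‖ ^ 2) ^ s : ℝ) : ℂ)).sub
    ((hcpow (-(2 * s))).const_mul (((1 - ‖z‖ ^ 2) ^ (s + 1) : ℝ) : ℂ)) using 1
  push_cast
  ring_nf

lemma differentiableOn_testFnOfExponent (s : ℝ) (hz : z ∈ unitDisk) :
    DifferentiableOn ℂ (testFnOfExponent s z) unitDisk := fun _ hw =>
  (hasDerivAt_testFnOfExponent s
    (one_sub_conj_mul_mem_slitPlane hz hw)).differentiableAt.differentiableWithinAt

lemma deriv_testFnOfExponent_self (s : ℝ) (hz : z ∈ unitDisk) :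
    deriv (testFnOfExponent s z) z = -conj z * ((1 / (1 - ‖z‖ ^ 2) ^ s : ℝ) : ℂ) := by
  have hpos := one_sub_norm_sq_pos hz
  have hfst : (1 - ‖z‖ ^ 2) ^ s * (1 - ‖z‖ ^ 2) ^ (-(2 * s)) = (1 - ‖z‖ ^ 2) ^ (-s) := by
    rw [← Real.rpow_add hpos]
    ring_nf
  have hsnd : (1 - ‖z‖ ^ 2) ^ (s + 1) * (1 - ‖z‖ ^ 2) ^ (-(2 * s) - 1) =
      (1 - ‖z‖ ^ 2) ^ (-s) := by
    rw [← Real.rpow_add hpos]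
    ring_nf
  rw [(hasDerivAt_testFnOfExponent s (one_sub_conj_mul_mem_slitPlane hz hz)).deriv,
    one_sub_conj_mul_self, ← Complex.ofReal_cpow hpos.le, ← Complex.ofReal_cpow hpos.le,
    ← Complex.ofReal_mul, ← Complex.ofReal_mul, mul_assoc, mul_assoc, hfst, hsnd,
    one_div, ← Real.rpow_neg hpos.le]
  push_cast
  ring

lemma norm_deriv_testFnOfExponent_le (hs : 0 ≤ s) (hz : z ∈ unitDisk) (hw : w ∈ unitDisk) :
    ‖deriv (testFnOfExponent s z) w‖ ≤
      (6 * s + 1) * ((1 - ‖z‖ ^ 2) / ‖1 - conj z * w‖ ^ 2) ^ s := by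
  have hslit := one_sub_conj_mul_mem_slitPlane hz hw
  have hnorm : 0 < ‖1 - conj z * w‖ := norm_pos_iff.2 (Complex.slitPlane_ne_zero hslit)
  have hpos := one_sub_norm_sq_pos hz
  have hratio : (1 - ‖z‖ ^ 2) / ‖1 - conj z * w‖ ≤ 2 := by
    rw [div_le_iff₀ hnorm]
    exact one_sub_norm_sq_le_two_mul_norm_one_sub_conj_mul z (mem_unitDisk.1 hw).le
  have hcoeff : |2 * s - 1| ≤ 2 * s + 1 := abs_le.2 ⟨by linarith, by linarith⟩
  rw [(hasDerivAt_testFnOfExponent s hslit).deriv, norm_mul, RCLike.norm_conj]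
  set A := 1 - ‖z‖ ^ 2
  set u := 1 - conj z * w
  have hK : A ^ s * ‖u‖ ^ (-(2 * s)) = (A / ‖u‖ ^ 2) ^ s := by
    rw [Real.div_rpow hpos.le (by positivity), ← Real.rpow_natCast_mul hnorm.le,
      Real.rpow_neg hnorm.le, Nat.cast_ofNat, div_eq_mul_inv]
  have hfst : ‖((((2 * s - 1) * A ^ s : ℝ) : ℂ) * u ^ ((-(2 * s) : ℝ) : ℂ))‖ =
      |2 * s - 1| * (A / ‖u‖ ^ 2) ^ s := by
    rw [norm_mul, Complex.norm_cpow_real, Complex.norm_real, Real.norm_eq_abs, abs_mul,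
      abs_of_pos (Real.rpow_pos_of_pos hpos s), mul_assoc, hK]
  have hsnd : ‖(((2 * s * A ^ (s + 1) : ℝ) : ℂ) * u ^ ((-(2 * s) - 1 : ℝ) : ℂ))‖ =
      2 * s * ((A / ‖u‖ ^ 2) ^ s * (A / ‖u‖)) := by
    rw [norm_mul, Complex.norm_cpow_real, Complex.norm_of_nonneg (by positivity), ← hK,
      Real.rpow_add_one hpos.ne', Real.rpow_sub_one hnorm.ne']
    ring
  calc ‖z‖ * _ ≤ 1 * (|2 * s - 1| * (A / ‖u‖ ^ 2) ^ s +
        2 * s * ((A / ‖u‖ ^ 2) ^ s * (A / ‖u‖))) := by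
        rw [← hfst, ← hsnd]
        gcongr
        · exact (mem_unitDisk.1 hz).le
        · exact norm_sub_le _ _
    _ ≤ 1 * ((2 * s + 1) * (A / ‖u‖ ^ 2) ^ s + 2 * s * ((A / ‖u‖ ^ 2) ^ s * 2)) := by gcongr
    _ = (6 * s + 1) * (A / ‖u‖ ^ 2) ^ s := by ring

lemma dirichletLintegral_testFnOfExponent_le {p α : ℝ} (hp : 0 ≤ p) (hs : 0 ≤ s)
    (hα : s * p = α + 2) (hz : z ∈ unitDisk) :
    dirichletLintegral p α (testFnOfExponent s z) ≤
      ENNReal.ofReal ((6 * s + 1) ^ p) * diskWeightMass α := by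
  rw [dirichletLintegral, ← lintegral_kernel_rpow_mul_weight α hz,
    ← lintegral_const_mul' _ _ ENNReal.ofReal_ne_top]
  refine setLIntegral_mono' measurableSet_unitDisk fun w hw => ?_
  have hratio : 0 ≤ (1 - ‖z‖ ^ 2) / ‖1 - conj z * w‖ ^ 2 :=
    div_nonneg (one_sub_norm_sq_pos hz).le (sq_nonneg _)
  have hw' := one_sub_norm_sq_pos hw
  rw [← ENNReal.ofReal_mul (by positivity), ← mul_assoc]
  gcongr
  calc ‖deriv (testFnOfExponent s z) w‖ ^ p
      ≤ ((6 * s + 1) * ((1 - ‖z‖ ^ 2) / ‖1 - conj z * w‖ ^ 2) ^ s) ^ p :=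
        Real.rpow_le_rpow (norm_nonneg _) (norm_deriv_testFnOfExponent_le hs hz hw) hp
    _ = (6 * s + 1) ^ p * ((1 - ‖z‖ ^ 2) / ‖1 - conj z * w‖ ^ 2) ^ (α + 2) := by
        rw [Real.mul_rpow (by positivity) (by positivity), ← Real.rpow_mul hratio, hα]

end TestFunction

lemma dirichletNorm_le {p α a : ℝ} {M : ℝ≥0∞} {f : ℂ → ℂ} (hp : 0 ≤ p) (hf₀ : ‖f 0‖ ≤ a)
    (hM : M ≠ ⊤) (hf : dirichletLintegral p α f ≤ M) :
    dirichletNorm p α f ≤ (a ^ p + M.toReal) ^ (1 / p) := by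
  unfold dirichletNorm
  gcongr

theorem testFnF_dirichlet_bounded_general (p α : ℝ) (hα : -1 < α) (hp : 0 < p) :
    ∃ C : ℝ, 0 < C ∧ ∀ z ∈ unitDisk,
      MemDirichlet p α (testFnF p α z) ∧
      dirichletNorm p α (testFnF p α z) ≤ C ∧
      testFnF p α z z = 0 ∧
      deriv (testFnF p α z) z =
        -(starRingEnd ℂ) z * ((1 / (1 - ‖z‖ ^ 2) ^ ((α + 2) / p) : ℝ) : ℂ) := by
  simp only [testFnF_eq_testFnOfExponent]
  set s := (α + 2) / p
  have hs₀ : 0 ≤ s := div_nonneg (by linarith) hp.le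
  have hsp : s * p = α + 2 := div_mul_cancel₀ _ hp.ne'
  let M : ℝ≥0∞ := ENNReal.ofReal ((6 * s + 1) ^ p) * diskWeightMass α
  have hM : M < ⊤ := ENNReal.mul_lt_top ENNReal.ofReal_lt_top (diskWeightMass_lt_top hα)
  refine ⟨(1 ^ p + M.toReal) ^ (1 / p), by positivity, fun z hz => ?_⟩
  have hle : dirichletLintegral p α (testFnOfExponent s z) ≤ M :=
    dirichletLintegral_testFnOfExponent_le hp.le hs₀ hsp hz
  exact ⟨⟨differentiableOn_testFnOfExponent s hz, hle.trans_lt hM⟩,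
    dirichletNorm_le hp.le (norm_testFnOfExponent_zero_le_one hs₀ hz) hM.ne hle,
    testFnOfExponent_self s hz, deriv_testFnOfExponent_self s hz⟩

/-- The test functions `F_z` have uniformly bounded `D^p_α` norm, with `F_z(z) = 0` and
`F'_z(z) = -z̄ (1-|z|²)^{-(α+2)/p}`. -/
theorem testFnF_dirichlet_bounded (p α : ℝ) (hα : -1 < α) (hp : 0 < p) (hpα : p < α + 2) :
    ∃ C : ℝ, 0 < C ∧ ∀ z ∈ unitDisk,
      MemDirichlet p α (testFnF p α z) ∧
      dirichletNorm p α (testFnF p α z) ≤ C ∧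
      testFnF p α z z = 0 ∧
      deriv (testFnF p α z) z =
        -(starRingEnd ℂ) z * ((1 / (1 - ‖z‖ ^ 2) ^ ((α + 2) / p) : ℝ) : ℂ) :=
  testFnF_dirichlet_bounded_general p α hα hp
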